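/- Define $F(\xi) = (Q_1^{\intercal}\widehat{\mathcal{A}}(\xi)^{-1}Q_1)^{-1}$ for $\xi \in (0, 2\pi)$, where $Q_1 = \frac{1}{\sqrt{M}}(1,\dots,1)^{\intercal}$. Then $F$ extends to a real-valued, even ($F(\xi) = F(2\pi - \xi)$), $2\pi$-periodic function that is $C^{\infty}$ on all of $\mathbb{R}$; in particular the apparent singularity at $\xi \in 2\pi\mathbb{Z}$ (where $\widehat{\mathcal{A}}$ is singular) is removable. -/

import Mathlib

open Matrix Complex Real

noncomputable def A0 (M : ℕ) (κ1 κ2 : ℝ) : Matrix (Fin M) (Fin M) ℂ := fun i j =>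
  if (i : ℤ) = (j : ℤ) then 2 * ((κ1 : ℂ) + κ2)
  else if |(i : ℤ) - (j : ℤ)| = 1 then -(κ1 : ℂ)
  else if |(i : ℤ) - (j : ℤ)| = 2 then -(κ2 : ℂ) else 0

noncomputable def A1 (M : ℕ) (κ1 κ2 : ℝ) : Matrix (Fin M) (Fin M) ℂ := fun i j =>
  if (i : ℕ) = 0 ∧ (j : ℕ) = M - 1 then -(κ1 : ℂ)
  else if ((i : ℕ) = 0 ∧ (j : ℕ) = M - 2) ∨ ((i : ℕ) = 1 ∧ (j : ℕ) = M - 1) then -(κ2 : ℂ)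
  else 0

noncomputable def Ahat (M : ℕ) (κ1 κ2 ξ : ℝ) : Matrix (Fin M) (Fin M) ℂ :=
  A0 M κ1 κ2 + Complex.exp (-(ξ : ℂ) * Complex.I) • A1 M κ1 κ2
    + Complex.exp ((ξ : ℂ) * Complex.I) • (A1 M κ1 κ2)ᵀ

noncomputable def q1 (M : ℕ) : Fin M → ℂ := fun _ => (1 / Real.sqrt M : ℝ)

section Aux

open scoped ComplexOrder

def sg (M : ℕ) (i : Fin M) : Fin M :=
  ⟨if (i : ℕ) + 1 < M then (i : ℕ) + 1 else 0, by have := i.2; split_ifs <;> omega⟩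

noncomputable def cf (M : ℕ) (ξ : ℝ) (i : Fin M) : ℂ :=
  if (i : ℕ) + 1 < M then 1 else Complex.exp ((ξ : ℂ) * Complex.I)

noncomputable def Sh (M : ℕ) (ξ : ℝ) : Matrix (Fin M) (Fin M) ℂ := fun i j =>
  if j = sg M i then cf M ξ i else 0

lemma conj_e (ξ : ℝ) : star (Complex.exp ((ξ : ℂ) * Complex.I)) =
    Complex.exp (-(ξ : ℂ) * Complex.I) := by
  simp [← Complex.exp_conj]

lemma e_mul (ξ : ℝ) : Complex.exp ((ξ : ℂ) * Complex.I) * Complex.exp (-(ξ : ℂ) * Complex.I) = 1 := by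
  rw [← Complex.exp_add]; simp

lemma Sh_mulVec (M : ℕ) (ξ : ℝ) (v : Fin M → ℂ) (i : Fin M) :
    (Sh M ξ *ᵥ v) i = cf M ξ i * v (sg M i) := by
  simp [Matrix.mulVec, dotProduct, Sh]

lemma sg_inj (M : ℕ) : Function.Injective (sg M) := by
  intro i j h
  have hi := i.2
  have hj := j.2
  simp only [sg, Fin.mk.injEq] at h
  ext
  split_ifs at h <;> omega

lemma Sh_mul_star (M : ℕ) (ξ : ℝ) : Sh M ξ * (Sh M ξ)ᴴ = 1 := by
  ext i j
  simp only [Matrix.mul_apply, Matrix.conjTranspose_apply, Sh, Matrix.one_apply, ite_mul, zero_mul,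
    Finset.sum_ite_eq', Finset.mem_univ, if_true, (sg_inj M).eq_iff]
  by_cases h : i = j
  · subst h
    simp only [if_true, cf]
    split_ifs
    · simp
    · rw [conj_e, e_mul]
  · simp [h]

lemma Sh_sq (M : ℕ) (ξ : ℝ) (i j : Fin M) : (Sh M ξ * Sh M ξ) i j =
    if j = sg M (sg M i) then cf M ξ i * cf M ξ (sg M i) else 0 := by
  simp only [Matrix.mul_apply, Sh, ite_mul, zero_mul, Finset.sum_ite_eq', Finset.mem_univ, if_true]
  rw [mul_ite, mul_zero]

lemma Ahat_eq (M : ℕ) (hM : 3 ≤ M) (κ1 κ2 ξ : ℝ) :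
    Ahat M κ1 κ2 ξ = (2 * ((κ1 : ℂ) + κ2)) • (1 : Matrix (Fin M) (Fin M) ℂ)
      - (κ1 : ℂ) • (Sh M ξ + (Sh M ξ)ᴴ)
      - (κ2 : ℂ) • (Sh M ξ * Sh M ξ + (Sh M ξ * Sh M ξ)ᴴ) := by
  ext i j
  have hi := i.2
  have hj := j.2
  simp only [Ahat, Matrix.add_apply, Matrix.sub_apply, Matrix.smul_apply, Matrix.transpose_apply,
    Matrix.conjTranspose_apply, Sh_sq, Matrix.one_apply, A0, A1, smul_eq_mul, Sh]
  obtain ⟨i, hi'⟩ := i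
  obtain ⟨j, hj'⟩ := j
  rw [← conj_e]
  generalize he : Complex.exp ((ξ : ℂ) * Complex.I) = e
  simp only [cf, sg, Fin.mk.injEq, he, apply_ite star, star_mul', star_one, star_zero]
  have a1 : |(i : ℤ) - j| = 1 ↔ (i + 1 = j ∨ j + 1 = i) := by
    rw [abs_eq (by norm_num)]; omega
  have a2 : |(i : ℤ) - j| = 2 ↔ (i + 2 = j ∨ j + 2 = i) := by
    rw [abs_eq (by norm_num)]; omega
  simp only [a1, a2, Nat.cast_inj]
  clear a1 a2 he
  have ci : i + 2 < M ∨ i + 2 = M ∨ i + 1 = M := by omega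
  have cj : j + 2 < M ∨ j + 2 = M ∨ j + 1 = M := by omega
  clear hi hj
  rcases ci with ci | ci | ci <;> rcases cj with cj | cj | cj <;>
    simp (disch := omega) only [if_pos, if_neg] <;>
    (try split_ifs) <;> first | (exfalso; omega) | ring

lemma L_eq (M : ℕ) (ξ : ℝ) : (1 - Sh M ξ)ᴴ * (1 - Sh M ξ) = 2 - Sh M ξ - (Sh M ξ)ᴴ := by
  have h : (Sh M ξ)ᴴ * Sh M ξ = 1 := mul_eq_one_comm.mp (Sh_mul_star M ξ)
  rw [Matrix.conjTranspose_sub, Matrix.conjTranspose_one]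
  have : (1 - (Sh M ξ)ᴴ) * (1 - Sh M ξ) = 1 - Sh M ξ - (Sh M ξ)ᴴ + (Sh M ξ)ᴴ * Sh M ξ := by
    noncomm_ring
  rw [this, h, ← one_add_one_eq_two]; abel

lemma decomp (M : ℕ) (hM : 3 ≤ M) (κ1 κ2 ξ : ℝ)
    (h1 : 0 < κ1) (h2 : 0 < κ1 + 4 * κ2) :
    ∃ (α : ℝ) (N : Matrix (Fin M) (Fin M) ℂ), 0 < α ∧ N.PosSemidef ∧
      Ahat M κ1 κ2 ξ = (α : ℂ) • ((1 - Sh M ξ)ᴴ * (1 - Sh M ξ)) + N := by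
  have hTS : (Sh M ξ)ᴴ * Sh M ξ = 1 := mul_eq_one_comm.mp (Sh_mul_star M ξ)
  have hST := Sh_mul_star M ξ
  rcases le_total 0 κ2 with h | h
  · refine ⟨κ1, (κ2 : ℂ) • ((1 - Sh M ξ * Sh M ξ)ᴴ * (1 - Sh M ξ * Sh M ξ)), h1, ?_, ?_⟩
    · exact (Matrix.posSemidef_conjTranspose_mul_self _).smul (by exact_mod_cast h)
    · rw [Ahat_eq M hM, L_eq]
      have : (1 - Sh M ξ * Sh M ξ)ᴴ * (1 - Sh M ξ * Sh M ξ) =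
          (2 : ℂ) • 1 - (Sh M ξ * Sh M ξ + (Sh M ξ * Sh M ξ)ᴴ) := by
        rw [Matrix.conjTranspose_sub, Matrix.conjTranspose_one, Matrix.conjTranspose_mul]
        generalize Sh M ξ = X at *
        generalize Xᴴ = Y at *
        have : Y * Y * (X * X) = 1 := by
          rw [Matrix.mul_assoc, ← Matrix.mul_assoc Y X X, hTS, Matrix.one_mul, hTS]
        rw [sub_mul, mul_sub, mul_sub, this, two_smul]; simp only [one_mul, mul_one]; abel
      rw [this, show (2 : Matrix (Fin M) (Fin M) ℂ) = (2 : ℂ) • 1 by rw [two_smul, one_add_one_eq_two]]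
      module
  · refine ⟨κ1 + 4 * κ2, ((-κ2 : ℝ) : ℂ) • (((1 - Sh M ξ)ᴴ * (1 - Sh M ξ))ᴴ * ((1 - Sh M ξ)ᴴ * (1 - Sh M ξ))), h2, ?_, ?_⟩
    · exact (Matrix.posSemidef_conjTranspose_mul_self _).smul
        (by exact_mod_cast (neg_nonneg.mpr h))
    · have hL : ((1 - Sh M ξ)ᴴ * (1 - Sh M ξ))ᴴ = (1 - Sh M ξ)ᴴ * (1 - Sh M ξ) := by
        simp [Matrix.conjTranspose_mul]
      rw [hL, Ahat_eq M hM, L_eq, Matrix.conjTranspose_mul]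
      generalize Sh M ξ = X at *
      generalize Xᴴ = Y at *
      have h2' : (2 : Matrix (Fin M) (Fin M) ℂ) = (2 : ℂ) • 1 := by rw [two_smul, one_add_one_eq_two]
      have : (2 - X - Y) * (2 - X - Y) = (6 : ℂ) • 1 - (4 : ℂ) • (X + Y) + (X * X + Y * Y) := by
        rw [h2']
        simp only [sub_mul, mul_sub, hTS, hST, Matrix.smul_mul, Matrix.mul_smul, Matrix.one_mul, Matrix.mul_one]
        module
      rw [this, h2']
      push_cast
      module

lemma Ahat_psd (M : ℕ) (hM : 3 ≤ M) (κ1 κ2 ξ : ℝ)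
    (h1 : 0 < κ1) (h2 : 0 < κ1 + 4 * κ2) : (Ahat M κ1 κ2 ξ).PosSemidef := by
  obtain ⟨α, N, hα, hN, h⟩ := decomp M hM κ1 κ2 ξ h1 h2
  rw [h]
  exact ((Matrix.posSemidef_conjTranspose_mul_self _).smul (by exact_mod_cast hα.le)).add hN

lemma psd_add_ker {M : ℕ} {A B : Matrix (Fin M) (Fin M) ℂ} (hA : A.PosSemidef) (hB : B.PosSemidef)
    {v : Fin M → ℂ} (h : star v ⬝ᵥ ((A + B) *ᵥ v) = 0) :
    star v ⬝ᵥ (A *ᵥ v) = 0 ∧ star v ⬝ᵥ (B *ᵥ v) = 0 := by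
  rw [Matrix.add_mulVec, dotProduct_add] at h
  exact (add_eq_zero_iff_of_nonneg (hA.dotProduct_mulVec_nonneg v) (hB.dotProduct_mulVec_nonneg v)).mp h

lemma Ahat_ker (M : ℕ) (hM : 3 ≤ M) (κ1 κ2 ξ : ℝ)
    (h1 : 0 < κ1) (h2 : 0 < κ1 + 4 * κ2) (v : Fin M → ℂ)
    (hv : star v ⬝ᵥ (Ahat M κ1 κ2 ξ *ᵥ v) = 0) (i : Fin M) : v i = cf M ξ i * v (sg M i) := by
  obtain ⟨α, N, hα, hN, h⟩ := decomp M hM κ1 κ2 ξ h1 h2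
  rw [h] at hv
  have := (psd_add_ker ((Matrix.posSemidef_conjTranspose_mul_self _).smul (by exact_mod_cast hα.le)) hN hv).1
  rw [Matrix.smul_mulVec, dotProduct_smul, smul_eq_mul, mul_eq_zero] at this
  have hz := this.resolve_left (by exact_mod_cast hα.ne')
  rw [← Matrix.mulVec_mulVec, Matrix.dotProduct_mulVec, ← Matrix.star_mulVec,
    dotProduct_star_self_eq_zero] at hz
  have := congrFun hz i
  rw [Matrix.sub_mulVec, Matrix.one_mulVec, Pi.sub_apply, Sh_mulVec] at this
  exact sub_eq_zero.mp this

lemma ker_const (M : ℕ) (hM : 3 ≤ M) (ξ : ℝ) (v : Fin M → ℂ)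
    (h : ∀ i, v i = cf M ξ i * v (sg M i)) (n : ℕ) (hn : n < M) : v ⟨n, hn⟩ = v ⟨0, by omega⟩ := by
  induction n with
  | zero => rfl
  | succ k ih =>
    rw [← ih (by omega), h ⟨k, by omega⟩]
    simp [cf, sg, hn]

lemma ker_last (M : ℕ) (hM : 3 ≤ M) (ξ : ℝ) (v : Fin M → ℂ)
    (h : ∀ i, v i = cf M ξ i * v (sg M i)) :
    v ⟨0, by omega⟩ = Complex.exp ((ξ : ℂ) * Complex.I) * v ⟨0, by omega⟩ := by
  have := h ⟨M - 1, by omega⟩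
  rw [ker_const M hM ξ v h] at this
  have e : ¬ (M - 1 + 1 < M) := by omega
  simpa [cf, sg, e] using this

noncomputable def Bm (M : ℕ) (κ1 κ2 ξ : ℝ) : Matrix (Fin M) (Fin M) ℂ :=
  Ahat M κ1 κ2 ξ + Matrix.vecMulVec (q1 M) (star (q1 M))

lemma Bm_pd (M : ℕ) (hM : 3 ≤ M) (κ1 κ2 ξ : ℝ)
    (h1 : 0 < κ1) (h2 : 0 < κ1 + 4 * κ2) : (Bm M κ1 κ2 ξ).PosDef := by
  have hA := Ahat_psd M hM κ1 κ2 ξ h1 h2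
  have hQ := Matrix.posSemidef_vecMulVec_self_star (q1 M)
  have hB : (Bm M κ1 κ2 ξ).PosSemidef := hA.add hQ
  rw [hB.posDef_iff_isUnit, ← Matrix.mulVec_injective_iff_isUnit]
  refine (injective_iff_map_eq_zero (Matrix.mulVecLin (Bm M κ1 κ2 ξ))).mpr ?_
  intro v hv
  rw [Matrix.mulVecLin_apply] at hv
  have h0 : star v ⬝ᵥ (Bm M κ1 κ2 ξ *ᵥ v) = 0 := by rw [hv]; simp
  obtain ⟨ha, hq⟩ := psd_add_ker hA hQ h0
  have hk := Ahat_ker M hM κ1 κ2 ξ h1 h2 v ha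
  have hc : ∀ i, v i = v ⟨0, by omega⟩ := fun i => ker_const M hM ξ v hk i i.2
  have hs := (hQ.dotProduct_mulVec_zero_iff v).mp hq
  have hs := congrFun hs ⟨0, by omega⟩
  have hM0 : (M : ℂ) ≠ 0 := by exact_mod_cast (by omega : M ≠ 0)
  have hM1 : (Real.sqrt M : ℂ) ≠ 0 := by
    have : Real.sqrt M ≠ 0 := (Real.sqrt_pos.mpr (by exact_mod_cast (by omega : 0 < M))).ne'
    exact_mod_cast this
  simp [Matrix.mulVec, dotProduct, Matrix.vecMulVec_apply, q1, fun i => hc i, hM0, hM1] at hs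
  ext i
  rw [hc i]
  simpa using hs

lemma Ahat_unit (M : ℕ) (hM : 3 ≤ M) (κ1 κ2 ξ : ℝ)
    (h1 : 0 < κ1) (h2 : 0 < κ1 + 4 * κ2) (hξ : ξ ∈ Set.Ioo (0 : ℝ) (2 * Real.pi)) :
    IsUnit (Ahat M κ1 κ2 ξ) := by
  rw [← Matrix.mulVec_injective_iff_isUnit]
  refine (injective_iff_map_eq_zero (Matrix.mulVecLin (Ahat M κ1 κ2 ξ))).mpr ?_
  intro v hv
  rw [Matrix.mulVecLin_apply] at hv
  have hk := Ahat_ker M hM κ1 κ2 ξ h1 h2 v (by rw [hv]; simp)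
  have hl := ker_last M hM ξ v hk
  have he : Complex.exp ((ξ : ℂ) * Complex.I) ≠ 1 := by
    intro he
    obtain ⟨n, hn⟩ := Complex.exp_eq_one_iff.mp he
    have h3 : (ξ : ℂ) = n * (2 * Real.pi) := by
      apply mul_right_cancel₀ Complex.I_ne_zero
      rw [hn]; ring
    have h4 : ξ = n * (2 * Real.pi) := by exact_mod_cast h3
    have hp := Real.two_pi_pos
    obtain ⟨ha, hb⟩ := hξ
    rw [h4] at ha hb
    have h5 : (0 : ℝ) < n := pos_of_mul_pos_left ha hp.le
    have h6 : (n : ℝ) < 1 := by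
      by_contra hh
      push Not at hh
      nlinarith
    have h7 : 0 < n := by exact_mod_cast h5
    have h8 : n < 1 := by exact_mod_cast h6
    omega
  have h0 : v ⟨0, by omega⟩ = 0 := by
    have : (1 - Complex.exp ((ξ : ℂ) * Complex.I)) * v ⟨0, by omega⟩ = 0 := by
      rw [sub_mul, one_mul, ← hl, sub_self]
    exact (mul_eq_zero.mp this).resolve_left (sub_ne_zero.mpr he.symm)
  ext i
  rw [ker_const M hM ξ v hk i i.2, h0]; rfl

noncomputable def yf (M : ℕ) (κ1 κ2 ξ : ℝ) : ℂ :=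
  star (q1 M) ⬝ᵥ ((Bm M κ1 κ2 ξ)⁻¹ *ᵥ q1 M)

lemma q1_ne (M : ℕ) (hM : 3 ≤ M) : q1 M ≠ 0 := by
  intro h
  have := congrFun h ⟨0, by omega⟩
  simp [q1] at this
  omega

lemma star_q1 (M : ℕ) : star (q1 M) = q1 M := by
  ext i; simp [q1]

lemma yf_pos (M : ℕ) (hM : 3 ≤ M) (κ1 κ2 ξ : ℝ)
    (h1 : 0 < κ1) (h2 : 0 < κ1 + 4 * κ2) : 0 < yf M κ1 κ2 ξ :=
  (Bm_pd M hM κ1 κ2 ξ h1 h2).inv.dotProduct_mulVec_pos (q1_ne M hM)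

lemma contDiff_det {n : ℕ} (f : ℝ → Matrix (Fin n) (Fin n) ℂ)
    (h : ∀ i j, ContDiff ℝ (⊤ : ℕ∞) (fun x => f x i j)) :
    ContDiff ℝ (⊤ : ℕ∞) (fun x => (f x).det) := by
  simp only [Matrix.det_apply']
  refine ContDiff.sum fun s _ => contDiff_const.mul (contDiff_prod fun i _ => h _ _)

lemma yf_smooth (M : ℕ) (hM : 3 ≤ M) (κ1 κ2 : ℝ)
    (h1 : 0 < κ1) (h2 : 0 < κ1 + 4 * κ2) : ContDiff ℝ (⊤ : ℕ∞) (yf M κ1 κ2) := by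
  have hentry : ∀ i j, ContDiff ℝ (⊤ : ℕ∞) (fun ξ => Bm M κ1 κ2 ξ i j) := by
    intro i j
    have ho : ContDiff ℝ (⊤ : ℕ∞) (fun ξ : ℝ => (ξ : ℂ)) := Complex.ofRealCLM.contDiff
    simp only [Bm, Ahat, Matrix.add_apply, Matrix.smul_apply, smul_eq_mul]
    have e1 : ContDiff ℝ (⊤ : ℕ∞) (fun ξ : ℝ => Complex.exp (-(ξ : ℂ) * Complex.I)) :=
      (ho.neg.mul contDiff_const).cexp
    have e2 : ContDiff ℝ (⊤ : ℕ∞) (fun ξ : ℝ => Complex.exp ((ξ : ℂ) * Complex.I)) :=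
      (ho.mul contDiff_const).cexp
    exact ((contDiff_const.add (e1.mul contDiff_const)).add (e2.mul contDiff_const)).add contDiff_const
  unfold yf
  simp only [dotProduct, Matrix.mulVec, Matrix.inv_def, Matrix.smul_apply, Ring.inverse_eq_inv', smul_eq_mul]
  have hd : ContDiff ℝ (⊤ : ℕ∞) (fun ξ => (Bm M κ1 κ2 ξ).det⁻¹) :=
    (contDiff_det _ hentry).inv fun ξ =>
      ((Matrix.isUnit_iff_isUnit_det _).mp (Bm_pd M hM κ1 κ2 ξ h1 h2).isUnit).ne_zero
  refine ContDiff.sum fun i _ => contDiff_const.mul (ContDiff.sum fun j _ => (hd.mul ?_).mul contDiff_const)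
  simp only [Matrix.adjugate_apply]
  refine contDiff_det _ fun k l => ?_
  by_cases hk : k = j
  · subst hk; simp only [Matrix.updateRow_self]; exact contDiff_const
  · simp only [Matrix.updateRow_ne hk]; exact hentry k l

lemma Ahat_per (M : ℕ) (κ1 κ2 ξ : ℝ) : Ahat M κ1 κ2 (ξ + 2 * Real.pi) = Ahat M κ1 κ2 ξ := by
  have e2 : Complex.exp (((ξ + 2 * Real.pi : ℝ) : ℂ) * Complex.I) = Complex.exp ((ξ : ℂ) * Complex.I) := by
    push_cast; rw [add_mul, Complex.exp_periodic]
  simp only [Ahat, ← conj_e, e2]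

lemma Ahat_refl (M : ℕ) (κ1 κ2 ξ : ℝ) : Ahat M κ1 κ2 (2 * Real.pi - ξ) = (Ahat M κ1 κ2 ξ)ᵀ := by
  have e2 : Complex.exp (((2 * Real.pi - ξ : ℝ) : ℂ) * Complex.I) = Complex.exp (-(ξ : ℂ) * Complex.I) := by
    push_cast; rw [← Complex.exp_periodic (-(ξ : ℂ) * Complex.I)]; ring_nf
  have hs : (A0 M κ1 κ2)ᵀ = A0 M κ1 κ2 := by
    ext i j
    simp only [Matrix.transpose_apply, A0, abs_sub_comm (j : ℤ) (i : ℤ), eq_comm (a := (j : ℤ))]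
  simp only [Ahat, ← conj_e ((2 * Real.pi - ξ : ℝ)), e2, Matrix.transpose_add, Matrix.transpose_smul,
    Matrix.transpose_transpose, hs]
  rw [← conj_e, star_star]; abel

lemma yf_refl (M : ℕ) (κ1 κ2 ξ : ℝ) : yf M κ1 κ2 (2 * Real.pi - ξ) = yf M κ1 κ2 ξ := by
  have hB : Bm M κ1 κ2 (2 * Real.pi - ξ) = (Bm M κ1 κ2 ξ)ᵀ := by
    simp only [Bm, Ahat_refl, Matrix.transpose_add, Matrix.transpose_vecMulVec, star_q1]
  simp only [yf, hB, star_q1, ← Matrix.transpose_nonsing_inv, Matrix.mulVec_transpose]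
  rw [Matrix.dotProduct_mulVec, dotProduct_comm]

lemma key (M : ℕ) (hM : 3 ≤ M) (κ1 κ2 ξ : ℝ)
    (h1 : 0 < κ1) (h2 : 0 < κ1 + 4 * κ2) (hξ : ξ ∈ Set.Ioo (0 : ℝ) (2 * Real.pi)) :
    (yf M κ1 κ2 ξ)⁻¹ - 1 = (star (q1 M) ⬝ᵥ ((Ahat M κ1 κ2 ξ)⁻¹ *ᵥ q1 M))⁻¹ := by
  have hA := (Matrix.isUnit_iff_isUnit_det _).mp (Ahat_unit M hM κ1 κ2 ξ h1 h2 hξ)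
  have hB := (Matrix.isUnit_iff_isUnit_det _).mp (Bm_pd M hM κ1 κ2 ξ h1 h2).isUnit
  have hy := (yf_pos M hM κ1 κ2 ξ h1 h2).ne'
  set u := (Ahat M κ1 κ2 ξ)⁻¹ *ᵥ q1 M with hu
  set x := star (q1 M) ⬝ᵥ u with hx
  have hAu : Ahat M κ1 κ2 ξ *ᵥ u = q1 M := by
    rw [hu, Matrix.mulVec_mulVec, Matrix.mul_nonsing_inv _ hA, Matrix.one_mulVec]
  have hBu : Bm M κ1 κ2 ξ *ᵥ u = (1 + x) • q1 M := by
    rw [Bm, Matrix.add_mulVec, hAu, Matrix.vecMulVec_mulVec, ← hx, add_smul, one_smul]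
    simp
  have hu2 : u = (1 + x) • ((Bm M κ1 κ2 ξ)⁻¹ *ᵥ q1 M) := by
    rw [← Matrix.mulVec_smul, ← hBu, Matrix.mulVec_mulVec, Matrix.nonsing_inv_mul _ hB,
      Matrix.one_mulVec]
  have hxy : x = (1 + x) * yf M κ1 κ2 ξ := by
    conv_lhs => rw [hx, hu2, dotProduct_smul, smul_eq_mul]
    rfl
  have hx0 : x ≠ 0 := by
    intro h
    rw [h] at hxy
    apply hy
    simpa using hxy.symm
  field_simp
  linear_combination hxy

lemma yf_re_im (M : ℕ) (hM : 3 ≤ M) (κ1 κ2 ξ : ℝ)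
    (h1 : 0 < κ1) (h2 : 0 < κ1 + 4 * κ2) : 0 < (yf M κ1 κ2 ξ).re ∧ 0 = (yf M κ1 κ2 ξ).im :=
  Complex.pos_iff.mp (yf_pos M hM κ1 κ2 ξ h1 h2)

end Aux

theorem F_extends_smoothly (M : ℕ) (hM : 3 ≤ M) (κ1 κ2 : ℝ)
    (h1 : 0 < κ1) (h2 : 0 < κ1 + 4 * κ2) :
    ∃ G : ℝ → ℝ, ContDiff ℝ (⊤ : ℕ∞) G ∧ (∀ ξ, G (ξ + 2 * Real.pi) = G ξ) ∧
      (∀ ξ, G (2 * Real.pi - ξ) = G ξ) ∧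
      ∀ ξ ∈ Set.Ioo (0 : ℝ) (2 * Real.pi),
        (G ξ : ℂ) = (star (q1 M) ⬝ᵥ ((Ahat M κ1 κ2 ξ)⁻¹ *ᵥ q1 M))⁻¹ := by
  have hy := fun ξ => yf_re_im M hM κ1 κ2 ξ h1 h2
  refine ⟨fun ξ => (yf M κ1 κ2 ξ).re⁻¹ - 1, ?_, ?_, ?_, ?_⟩
  · refine ContDiff.sub (ContDiff.inv (Complex.reCLM.contDiff.comp (yf_smooth M hM κ1 κ2 h1 h2)) ?_) contDiff_const
    intro ξ
    exact (hy ξ).1.ne'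
  · intro ξ
    simp only [yf, Bm, Ahat_per]
  · intro ξ
    simp only [yf_refl]
  · intro ξ hξ
    rw [← key M hM κ1 κ2 ξ h1 h2 hξ]
    have : ((yf M κ1 κ2 ξ).re : ℂ) = yf M κ1 κ2 ξ :=
      Complex.ext rfl (by simpa using (hy ξ).2)
    push_cast
    rw [this]
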